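/- If f : ℝⁿ → ℝ is L-Lipschitz (with respect to the Euclidean norm), then its spherically symmetric increasing rearrangement f_* is also L-Lipschitz. -/

import Mathlib

open Set MeasureTheory

/-- Spherically symmetric rearrangement of a set: the centered open ball with the same
Lebesgue measure (all of space if the measure is infinite). -/
noncomputable def ballRe {n : ℕ} (A : Set (EuclideanSpace ℝ (Fin n))) :
    Set (EuclideanSpace ℝ (Fin n)) :=
  if volume A = ⊤ then Set.univ
  else Metric.ball 0
    (((volume A).toReal / (volume (Metric.ball (0 : EuclideanSpace ℝ (Fin n)) 1)).toReal)
      ^ ((1 : ℝ) / n))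

/-- Decreasing rearrangement `g*(y) = ∫₀^∞ 1_{{g > t}*}(y) dt`. -/
noncomputable def decRe {n : ℕ} (g : EuclideanSpace ℝ (Fin n) → ℝ)
    (y : EuclideanSpace ℝ (Fin n)) : ℝ :=
  ∫ t in Set.Ioi (0 : ℝ), (ballRe {z | t < g z}).indicator (fun _ => (1 : ℝ)) y

/-- Spherically symmetric increasing rearrangement `f_* = -log((e^{-f})*)`. -/
noncomputable def incRe {n : ℕ} (f : EuclideanSpace ℝ (Fin n) → ℝ)
    (y : EuclideanSpace ℝ (Fin n)) : ℝ :=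
  - Real.log (decRe (fun z => Real.exp (-f z)) y)

open scoped ENNReal

lemma bm1_compact {K K' C : Set ℝ} (hK : IsCompact K) (hK' : IsCompact K') (h1 : K.Nonempty)
    (h2 : K'.Nonempty) (h : ∀ x ∈ K, ∀ y ∈ K', x + y ∈ C) :
    volume K + volume K' ≤ volume C := by
  obtain ⟨m, hm, hm'⟩ := hK.exists_isGreatest h1
  obtain ⟨l, hl, hl'⟩ := hK'.exists_isLeast h2
  have e1 : volume ((fun x => x + l) '' K) = volume K := by
    rw [image_add_right]; exact measure_preimage_add_right _ _ _
  have e2 : volume ((fun x => m + x) '' K') = volume K' := by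
    rw [image_add_left]; exact measure_preimage_add _ _ _
  have c1 : IsCompact ((fun x => x + l) '' K) := hK.image (by fun_prop)
  have hi : volume (((fun x => x + l) '' K) ∩ ((fun x => m + x) '' K')) = 0 := by
    refine measure_mono_null (t := {m + l}) ?_ (by simp)
    rintro z ⟨⟨x, hx, rfl⟩, ⟨y, hy, hxy⟩⟩
    have := hm' hx
    have := hl' hy
    simp only [mem_singleton_iff] at *
    linarith
  have c2 : IsCompact ((fun x => m + x) '' K') := hK'.image (by fun_prop)
  have hu := measure_union_add_inter (μ := volume) ((fun x => x + l) '' K) c2.measurableSet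
  rw [hi, add_zero, e1, e2] at hu
  rw [← hu]
  apply measure_mono
  rintro z (⟨x, hx, rfl⟩ | ⟨y, hy, rfl⟩)
  · exact h x hx l hl
  · exact h m hm y hy

lemma bm1_add {A B C : Set ℝ} (hA : MeasurableSet A) (hB : MeasurableSet B) (h1 : A.Nonempty)
    (h2 : B.Nonempty) (h : ∀ x ∈ A, ∀ y ∈ B, x + y ∈ C) :
    volume A + volume B ≤ volume C := by
  obtain ⟨p, hp⟩ := h1
  obtain ⟨q, hq⟩ := h2
  have key : ∀ K ⊆ A, IsCompact K → ∀ K' ⊆ B, IsCompact K' → volume K + volume K' ≤ volume C := by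
    intro K hKA hK K' hKB hK'
    refine le_trans (add_le_add (measure_mono (subset_insert p K)) (measure_mono (subset_insert q K')))
      (bm1_compact (hK.insert p) (hK'.insert q) (insert_nonempty _ _) (insert_nonempty _ _) ?_)
    intro x hx y hy
    exact h x (insert_subset hp hKA hx) y (insert_subset hq hKB hy)
  rw [hA.measure_eq_iSup_isCompact, hB.measure_eq_iSup_isCompact]
  simp only [iSup_and']
  exact ENNReal.biSup_add_biSup_le' ⟨∅, by simp⟩ ⟨∅, by simp⟩
    (fun K hK K' hK' => key K hK.1 hK.2 K' hK'.1 hK'.2)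

lemma bm1 {a b : ℝ} (ha : 0 < a) (hb : 0 < b) {A B C : Set ℝ} (hA : MeasurableSet A)
    (hB : MeasurableSet B) (h1 : A.Nonempty)
    (h2 : B.Nonempty) (h : ∀ x ∈ A, ∀ y ∈ B, a * x + b * y ∈ C) :
    ENNReal.ofReal a * volume A + ENNReal.ofReal b * volume B ≤ volume C := by
  have e : ∀ {c : ℝ}, 0 < c → ∀ S : Set ℝ, volume ((fun x => c⁻¹ * x) ⁻¹' S) =
      ENNReal.ofReal c * volume S := by
    intro c hc S
    rw [Real.volume_preimage_mul_left (by positivity)]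
    rw [inv_inv, abs_of_pos hc]
  rw [← e ha, ← e hb]
  refine bm1_add (hA.preimage (by fun_prop)) (hB.preimage (by fun_prop)) ?_ ?_ ?_
  · obtain ⟨p, hp⟩ := h1
    exact ⟨a * p, by simpa [ha.ne'] using hp⟩
  · obtain ⟨p, hp⟩ := h2
    exact ⟨b * p, by simpa [hb.ne'] using hp⟩
  · intro x hx y hy
    have := h _ hx _ hy
    simpa [ha.ne', hb.ne'] using this

lemma layer {F : ℝ → ℝ≥0∞} (hF : Measurable F) (h1 : ∀ x, F x ≤ 1) :
    ∫⁻ x, F x = ∫⁻ t in Ioi (0:ℝ), volume {x | ENNReal.ofReal t < F x} := by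
  have := lintegral_eq_lintegral_meas_lt (volume : Measure ℝ) (f := fun x => (F x).toReal)
    (Filter.Eventually.of_forall fun x => ENNReal.toReal_nonneg) hF.ennreal_toReal.aemeasurable
  have ht : ∀ x, F x ≠ ⊤ := fun x => ((h1 x).trans_lt ENNReal.one_lt_top).ne
  simp only [ENNReal.ofReal_toReal (ht _)] at this
  rw [this]
  refine setLIntegral_congr_fun measurableSet_Ioi ?_
  intro t ht'
  simp only
  congr 1
  ext x
  exact (ENNReal.ofReal_lt_iff_lt_toReal (le_of_lt ht') (ht x)).symm

lemma pl_core {a b : ℝ} (ha : 0 < a) (hb : 0 < b) {F G H : ℝ → ℝ≥0∞} (hF : Measurable F)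
    (hG : Measurable G) (hH : Measurable H) (sF : ⨆ x, F x = 1) (sG : ⨆ x, G x = 1)
    (h : ∀ t x y, t < F x → t < G y → t < H (a * x + b * y)) :
    ENNReal.ofReal a * (∫⁻ x, F x) + ENNReal.ofReal b * (∫⁻ x, G x) ≤ ∫⁻ x, H x := by
  have F1 : ∀ x, F x ≤ 1 := fun x => sF ▸ le_iSup F x
  have G1 : ∀ x, G x ≤ 1 := fun x => sG ▸ le_iSup G x
  calc _ ≤ ∫⁻ x, min (H x) 1 := ?_
    _ ≤ _ := lintegral_mono fun x => min_le_left _ _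
  rw [layer hF F1, layer hG G1, layer (hH.min measurable_const) (fun x => min_le_right _ _),
    ← lintegral_const_mul' _ _ ENNReal.ofReal_ne_top, ← lintegral_const_mul' _ _ ENNReal.ofReal_ne_top]
  have mm : ∀ F : ℝ → ℝ≥0∞, Measurable fun t : ℝ => volume {x | ENNReal.ofReal t < F x} := by
    intro F
    apply Antitone.measurable
    intro s t hst
    apply measure_mono
    intro x hx
    exact lt_of_le_of_lt (ENNReal.ofReal_le_ofReal hst) hx
  rw [← lintegral_add_left ((mm F).const_mul _)]
  refine lintegral_mono fun t => ?_
  simp only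
  rcases lt_or_ge (ENNReal.ofReal t) 1 with ht | ht
  · refine bm1 ha hb (measurableSet_lt measurable_const hF) (measurableSet_lt measurable_const hG)
      ?_ ?_ ?_
    · rw [← sF] at ht
      exact lt_iSup_iff.1 ht
    · rw [← sG] at ht
      exact lt_iSup_iff.1 ht
    · intro x hx y hy
      exact lt_min (h _ _ _ hx hy) ht
  · have e1 : {x | ENNReal.ofReal t < F x} = ∅ := by
      ext x; simpa using (F1 x).trans ht
    have e2 : {x | ENNReal.ofReal t < G x} = ∅ := by
      ext x; simpa using (G1 x).trans ht
    simp [e1, e2]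

lemma amgm {a b : ℝ} (ha : 0 < a) (hb : 0 < b) (hab : a + b = 1) (X Y : ℝ≥0∞) :
    X ^ a * Y ^ b ≤ ENNReal.ofReal a * X + ENNReal.ofReal b * Y := by
  have hp : (a⁻¹).HolderConjugate b⁻¹ :=
    ⟨by simp [hab], by positivity, by positivity⟩
  have := ENNReal.young_inequality (X ^ a) (Y ^ b) hp
  rw [← ENNReal.rpow_mul, ← ENNReal.rpow_mul, mul_inv_cancel₀ ha.ne', mul_inv_cancel₀ hb.ne',
    ENNReal.rpow_one, ENNReal.rpow_one, ENNReal.ofReal_inv_of_pos ha, ENNReal.ofReal_inv_of_pos hb,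
    div_eq_mul_inv, div_eq_mul_inv, inv_inv, inv_inv, mul_comm X, mul_comm Y] at this
  exact this

lemma pl_bdd {a b : ℝ} (ha : 0 < a) (hb : 0 < b) (hab : a + b = 1) {F G H : ℝ → ℝ≥0∞}
    (hF : Measurable F) (hG : Measurable G) (hH : Measurable H) (sF : ⨆ x, F x ≠ ⊤)
    (sG : ⨆ x, G x ≠ ⊤) (h : ∀ x y, F x ^ a * G y ^ b ≤ H (a * x + b * y)) :
    (∫⁻ x, F x) ^ a * (∫⁻ x, G x) ^ b ≤ ∫⁻ x, H x := by
  set M := ⨆ x, F x with hM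
  set N := ⨆ x, G x with hN
  rcases eq_or_ne M 0 with M0 | M0
  · have : ∀ x, F x = 0 := fun x => le_antisymm (M0 ▸ le_iSup F x) bot_le
    simp [this, ha]
  rcases eq_or_ne N 0 with N0 | N0
  · have : ∀ x, G x = 0 := fun x => le_antisymm (N0 ▸ le_iSup G x) bot_le
    simp [this, hb]
  have Ma : M ^ a ≠ 0 := by simp [M0, sF]
  have Nb : N ^ b ≠ 0 := by simp [N0, sG]
  have Ma' : M ^ a ≠ ⊤ := ENNReal.rpow_ne_top_of_nonneg ha.le sF
  have Nb' : N ^ b ≠ ⊤ := ENNReal.rpow_ne_top_of_nonneg hb.le sG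
  have c0 : M ^ a * N ^ b ≠ 0 := mul_ne_zero Ma Nb
  have c1 : M ^ a * N ^ b ≠ ⊤ := ENNReal.mul_ne_top Ma' Nb'
  have key := pl_core ha hb (F := fun x => M⁻¹ * F x) (G := fun x => N⁻¹ * G x)
    (H := fun x => (M ^ a * N ^ b)⁻¹ * H x) (hF.const_mul _) (hG.const_mul _) (hH.const_mul _)
    (by rw [← ENNReal.mul_iSup, ← hM, ENNReal.inv_mul_cancel M0 sF])
    (by rw [← ENNReal.mul_iSup, ← hN, ENNReal.inv_mul_cancel N0 sG])
    (by
      intro t x y h1 h2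
      have tt : t = t ^ a * t ^ b := by
        rw [← ENNReal.rpow_add_of_nonneg _ _ ha.le hb.le, hab, ENNReal.rpow_one]
      rw [tt]
      calc t ^ a * t ^ b < (M⁻¹ * F x) ^ a * (N⁻¹ * G y) ^ b :=
            ENNReal.mul_lt_mul (ENNReal.rpow_lt_rpow h1 ha) (ENNReal.rpow_lt_rpow h2 hb)
        _ = (M ^ a * N ^ b)⁻¹ * (F x ^ a * G y ^ b) := by
            rw [ENNReal.mul_rpow_of_nonneg _ _ ha.le, ENNReal.mul_rpow_of_nonneg _ _ hb.le,
              ENNReal.inv_rpow, ENNReal.inv_rpow, ENNReal.mul_inv (Or.inl Ma) (Or.inl Ma')]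
            ring
        _ ≤ _ := by gcongr; exact h x y)
  have k2 := (amgm ha hb hab _ _).trans key
  rw [lintegral_const_mul _ hF, lintegral_const_mul _ hG, lintegral_const_mul _ hH,
    ENNReal.mul_rpow_of_nonneg _ _ ha.le, ENNReal.mul_rpow_of_nonneg _ _ hb.le,
              ENNReal.inv_rpow, ENNReal.inv_rpow] at k2
  have k3 : (M ^ a * N ^ b)⁻¹ * ((∫⁻ x, F x) ^ a * (∫⁻ x, G x) ^ b) ≤ (M ^ a * N ^ b)⁻¹ * ∫⁻ x, H x := by
    refine le_trans (le_of_eq ?_) k2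
    rw [ENNReal.mul_inv (Or.inl Ma) (Or.inl Ma')]
    ring
  exact (ENNReal.mul_le_mul_iff_right (ENNReal.inv_ne_zero.2 c1) (ENNReal.inv_ne_top.2 c0)).1 k3

lemma trunc_tendsto {F : ℝ → ℝ≥0∞} (hF : Measurable F) :
    Filter.Tendsto (fun k : ℕ => ∫⁻ x, min (F x) k) Filter.atTop (nhds (∫⁻ x, F x)) := by
  refine lintegral_tendsto_of_tendsto_of_monotone (fun k => (hF.min measurable_const).aemeasurable)
    (Filter.Eventually.of_forall fun x => ?_) (Filter.Eventually.of_forall fun x => ?_)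
  · intro i j hij
    have : (i : ℝ≥0∞) ≤ j := by exact_mod_cast hij
    exact min_le_min le_rfl this
  · have := (tendsto_const_nhds (x := F x)).min ENNReal.tendsto_nat_nhds_top
    simpa using this

lemma pl_one {a b : ℝ} (ha : 0 < a) (hb : 0 < b) (hab : a + b = 1) {F G H : ℝ → ℝ≥0∞}
    (hF : Measurable F) (hG : Measurable G) (hH : Measurable H)
    (h : ∀ x y, F x ^ a * G y ^ b ≤ H (a * x + b * y)) :
    (∫⁻ x, F x) ^ a * (∫⁻ x, G x) ^ b ≤ ∫⁻ x, H x := by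
  rcases eq_or_ne (∫⁻ x, F x) 0 with F0 | F0
  · simp [F0, ha]
  rcases eq_or_ne (∫⁻ x, G x) 0 with G0 | G0
  · simp [G0, hb]
  have t1 := ((ENNReal.continuous_rpow_const (y := a)).tendsto _).comp (trunc_tendsto hF)
  have t2 := ((ENNReal.continuous_rpow_const (y := b)).tendsto _).comp (trunc_tendsto hG)
  have t3 := ENNReal.Tendsto.mul t1 (Or.inl (by simp [F0, ha, ha.not_gt])) t2
    (Or.inl (by simp [G0, hb, hb.not_gt]))
  refine le_of_tendsto' t3 fun k => ?_
  have bd : ∀ F : ℝ → ℝ≥0∞, ⨆ x, min (F x) k ≠ ⊤ := fun F =>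
    ((iSup_le fun x => min_le_right (F x) (k : ℝ≥0∞)).trans_lt (ENNReal.natCast_lt_top k)).ne
  refine pl_bdd ha hb hab (hF.min measurable_const) (hG.min measurable_const) hH (bd F) (bd G) ?_
  intro x y
  refine le_trans ?_ (h x y)
  gcongr <;> exact min_le_left _ _

lemma pl_pi {a b : ℝ} (ha : 0 < a) (hb : 0 < b) (hab : a + b = 1) (n : ℕ) :
    ∀ {F G H : (Fin n → ℝ) → ℝ≥0∞}, Measurable F → Measurable G → Measurable H →
    (∀ x y, F x ^ a * G y ^ b ≤ H (a • x + b • y)) →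
    (∫⁻ x, F x) ^ a * (∫⁻ x, G x) ^ b ≤ ∫⁻ x, H x := by
  induction n with
  | zero =>
    intro F G H hF hG hH h
    have e : ∀ F : (Fin 0 → ℝ) → ℝ≥0∞, ∫⁻ x, F x = F default := by
      intro F
      rw [lintegral_unique, volume_pi, Measure.pi_of_empty, Measure.dirac_apply_of_mem (mem_univ _),
        mul_one]
      exact congrArg F (Subsingleton.elim _ _)
    rw [e, e, e]
    convert h default default
  | succ n ih =>
    intro F G H hF hG hH h
    have mp := (volume_preserving_piFinSuccAbove (fun _ : Fin (n+1) => ℝ) 0).symm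
    set e := (MeasurableEquiv.piFinSuccAbove (fun _ : Fin (n+1) => ℝ) 0).symm with he
    have lin : ∀ x y v w, e (a * x + b * y, a • v + b • w) = a • e (x, v) + b • e (y, w) := by
      intro x y v w
      ext i
      refine Fin.cases ?_ (fun j => ?_) i <;> simp [he, MeasurableEquiv.piFinSuccAbove]
    have int : ∀ {F : (Fin (n+1) → ℝ) → ℝ≥0∞}, Measurable F →
        ∫⁻ x, F x = ∫⁻ x, ∫⁻ v, F (e (x, v)) := by
      intro F hF
      rw [← mp.lintegral_comp hF]
      exact lintegral_prod _ (hF.comp e.measurable).aemeasurable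
    have ms : ∀ {F : (Fin (n+1) → ℝ) → ℝ≥0∞}, Measurable F →
        Measurable fun x => ∫⁻ v, F (e (x, v)) := by
      intro F hF
      exact Measurable.lintegral_prod_right' (f := fun p => F (e p)) (hF.comp e.measurable)
    rw [int hF, int hG, int hH]
    refine pl_one ha hb hab (ms hF) (ms hG) (ms hH) fun x y => ?_
    have sec : ∀ {F : (Fin (n+1) → ℝ) → ℝ≥0∞}, Measurable F → ∀ x,
        Measurable fun v => F (e (x, v)) := fun hF x =>
      hF.comp (e.measurable.comp measurable_prodMk_left)
    refine ih (sec hF x) (sec hG y) (sec hH _) fun v w => ?_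
    rw [lin]
    exact h _ _

lemma pl_set {a b : ℝ} (ha : 0 < a) (hb : 0 < b) (hab : a + b = 1) {n : ℕ}
    {A B C : Set (EuclideanSpace ℝ (Fin n))} (hA : MeasurableSet A) (hB : MeasurableSet B)
    (hC : MeasurableSet C) (h : ∀ x ∈ A, ∀ y ∈ B, a • x + b • y ∈ C) :
    volume A ^ a * volume B ^ b ≤ volume C := by
  have mp := (EuclideanSpace.volume_preserving_symm_measurableEquiv_toLp (Fin n)).symm
  set e := (MeasurableEquiv.toLp 2 (Fin n → ℝ)).symm.symm with he
  have key : ∀ {A : Set (EuclideanSpace ℝ (Fin n))}, MeasurableSet A →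
      volume A = ∫⁻ v, A.indicator 1 (e v) := by
    intro A hA
    rw [mp.lintegral_comp (measurable_one.indicator hA), lintegral_indicator_one hA]
  rw [key hA, key hB, key hC]
  have ms : ∀ {A : Set (EuclideanSpace ℝ (Fin n))}, MeasurableSet A →
      Measurable fun v => A.indicator (1 : EuclideanSpace ℝ (Fin n) → ℝ≥0∞) (e v) := fun hA =>
    (measurable_one.indicator hA).comp e.measurable
  refine pl_pi ha hb hab n (ms hA) (ms hB) (ms hC) fun x y => ?_
  have lin : e (a • x + b • y) = a • e x + b • e y := rfl
  rw [lin]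
  by_cases hx : e x ∈ A
  · by_cases hy : e y ∈ B
    · simp [hx, hy, h _ hx _ hy]
    · simp [hy, hb]
  · simp [hx, ha]

open Pointwise in
lemma bm_ball {n : ℕ} {r d : ℝ} (hr : 0 < r) (hd : 0 < d)
    {U V : Set (EuclideanSpace ℝ (Fin n))} (hU : MeasurableSet U) (hV : MeasurableSet V)
    (h : ∀ x ∈ U, ∀ y ∈ Metric.ball (0 : EuclideanSpace ℝ (Fin n)) d, x + y ∈ V)
    (hvol : volume U = ENNReal.ofReal (r ^ n) *
      volume (Metric.ball (0 : EuclideanSpace ℝ (Fin n)) 1)) :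
    ENNReal.ofReal ((r + d) ^ n) * volume (Metric.ball (0 : EuclideanSpace ℝ (Fin n)) 1)
      ≤ volume V := by
  set ω := volume (Metric.ball (0 : EuclideanSpace ℝ (Fin n)) 1) with hω
  have hs : 0 < r + d := by positivity
  have hab : r / (r + d) + d / (r + d) = 1 := by field_simp
  have vA : volume (r⁻¹ • U) = ω := by
    rw [Measure.addHaar_smul, hvol, finrank_euclideanSpace_fin, ← mul_assoc,
      ← ENNReal.ofReal_mul (abs_nonneg _), abs_of_pos (by positivity), inv_pow,
      inv_mul_cancel₀ (by positivity)]
    simp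
  have key := pl_set (a := r / (r + d)) (b := d / (r + d)) (by positivity) (by positivity) hab
    (A := r⁻¹ • U) (B := Metric.ball 0 1) (C := (r + d)⁻¹ • V)
    (hU.const_smul₀ _) measurableSet_ball (hV.const_smul₀ _)
    (by
      rintro _ ⟨x, hx, rfl⟩ y hy
      refine ⟨x + d • y, h x hx _ ?_, ?_⟩
      · rw [mem_ball_zero_iff] at hy ⊢
        rw [norm_smul, Real.norm_of_nonneg hd.le]
        nlinarith
      · simp only [smul_add, smul_smul]
        congr 2 <;> field_simp)
  rw [vA, ← hω, ← ENNReal.rpow_add_of_nonneg _ _ (by positivity) (by positivity), hab,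
    ENNReal.rpow_one, Measure.addHaar_smul, finrank_euclideanSpace_fin,
    abs_of_pos (by positivity)] at key
  calc _ ≤ ENNReal.ofReal ((r + d) ^ n) * (ENNReal.ofReal ((r + d)⁻¹ ^ n) * volume V) := by gcongr
    _ = volume V := by
      rw [← mul_assoc, ← ENNReal.ofReal_mul (by positivity), inv_pow, mul_inv_cancel₀ (by positivity)]
      simp

noncomputable def rad {n : ℕ} (A : Set (EuclideanSpace ℝ (Fin n))) : ℝ :=
  ((volume A).toReal / (volume (Metric.ball (0 : EuclideanSpace ℝ (Fin n)) 1)).toReal)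
      ^ ((1 : ℝ) / n)

lemma om_pos (n : ℕ) : 0 < (volume (Metric.ball (0 : EuclideanSpace ℝ (Fin n)) 1)).toReal :=
  ENNReal.toReal_pos (Metric.measure_ball_pos _ _ one_pos).ne' measure_ball_lt_top.ne

lemma le_rad {n : ℕ} (hn : n ≠ 0) {A : Set (EuclideanSpace ℝ (Fin n))} (hA : volume A ≠ ⊤) {s : ℝ}
    (hs : 0 ≤ s) (h : ENNReal.ofReal (s ^ n) *
      volume (Metric.ball (0 : EuclideanSpace ℝ (Fin n)) 1) ≤ volume A) : s ≤ rad A := by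
  have h' := ENNReal.toReal_mono hA h
  rw [ENNReal.toReal_mul, ENNReal.toReal_ofReal (by positivity)] at h'
  have := (le_div_iff₀ (om_pos n)).2 h'
  have h2 := Real.rpow_le_rpow (by positivity) this (z := (1:ℝ)/n) (by positivity)
  rw [one_div, Real.pow_rpow_inv_natCast hs hn, ← one_div] at h2
  exact h2

lemma rad_vol {n : ℕ} (hn : n ≠ 0) {A : Set (EuclideanSpace ℝ (Fin n))} (hA : volume A ≠ ⊤) :
    volume A = ENNReal.ofReal (rad A ^ n) *
      volume (Metric.ball (0 : EuclideanSpace ℝ (Fin n)) 1) := by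
  have := om_pos n
  rw [rad, one_div, Real.rpow_inv_natCast_pow (by positivity) hn]
  conv_rhs => rw [← ENNReal.ofReal_toReal (measure_ball_lt_top (μ := volume)
    (x := (0 : EuclideanSpace ℝ (Fin n))) (r := 1)).ne]
  rw [← ENNReal.ofReal_mul (by positivity), ENNReal.toReal_ofReal (by positivity),
    div_mul_cancel₀ _ this.ne', ENNReal.ofReal_toReal hA]

lemma mem_ballRe_iff {n : ℕ} {A : Set (EuclideanSpace ℝ (Fin n))} {x} :
    x ∈ ballRe A ↔ volume A = ⊤ ∨ ‖x‖ < rad A := by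
  unfold ballRe
  split_ifs with h
  · simp [h]
  · simp [h, rad]

lemma ballRe_step {n : ℕ} (hn : n ≠ 0) {U V : Set (EuclideanSpace ℝ (Fin n))}
    (hU : IsOpen U) (hV : IsOpen V) {x y : EuclideanSpace ℝ (Fin n)}
    (h : ∀ u ∈ U, ∀ z, ‖z‖ < ‖x - y‖ → u + z ∈ V) (hUV : U ⊆ V) (hx : x ∈ ballRe U) :
    y ∈ ballRe V := by
  rw [mem_ballRe_iff] at hx ⊢
  by_cases hVt : volume V = ⊤
  · exact Or.inl hVt
  right
  have hUt : volume U ≠ ⊤ := ne_top_of_le_ne_top hVt (measure_mono hUV)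
  have hx := hx.resolve_left hUt
  rcases eq_or_ne x y with rfl | hxy
  · refine hx.trans_le (le_rad hn hVt (by unfold rad; positivity) ?_)
    rw [← rad_vol hn hUt]
    exact measure_mono hUV
  have hr : 0 < rad U := (norm_nonneg x).trans_lt hx
  have hd : 0 < ‖x - y‖ := norm_pos_iff.2 (sub_ne_zero.2 hxy)
  have := le_rad hn hVt (s := rad U + ‖x - y‖) (by positivity)
    (bm_ball hr hd hU.measurableSet hV.measurableSet
      (fun u hu z hz => h u hu z (by simpa using hz)) (rad_vol hn hUt))
  have := norm_le_insert x y
  linarith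

lemma ballRe_ball {n : ℕ} (hn : n ≠ 0) {A : Set (EuclideanSpace ℝ (Fin n))} {s : ℝ} (hs : 0 ≤ s)
    (h : Metric.ball 0 s ⊆ A) {x : EuclideanSpace ℝ (Fin n)} (hx : ‖x‖ < s) : x ∈ ballRe A := by
  rw [mem_ballRe_iff]
  by_cases hVt : volume A = ⊤
  · exact Or.inl hVt
  right
  refine hx.trans_le (le_rad hn hVt hs ?_)
  refine le_trans (le_of_eq ?_) (measure_mono h)
  haveI : NeZero n := ⟨hn⟩
  haveI : Nontrivial (EuclideanSpace ℝ (Fin n)) :=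
    Module.nontrivial_of_finrank_pos (R := ℝ) (by simpa using Nat.pos_of_ne_zero hn)
  rw [Measure.addHaar_ball _ _ hs, finrank_euclideanSpace_fin]

theorem incRe_lipschitz {n : ℕ} (L : ℝ) (hL : 0 < L)
    (f : EuclideanSpace ℝ (Fin n) → ℝ)
    (hf : ∀ x y, |f x - f y| ≤ L * ‖x - y‖) :
    ∀ x y, |incRe f x - incRe f y| ≤ L * ‖x - y‖ := by
  rcases eq_or_ne n 0 with rfl | hn
  · intro x y
    have : x = y := Subsingleton.elim _ _
    simp [this]
  set g : EuclideanSpace ℝ (Fin n) → ℝ := fun z => Real.exp (-f z) with hg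
  have hfc : Continuous f := by
    refine (LipschitzWith.of_dist_le_mul (K := ⟨L, hL.le⟩) fun x y => ?_).continuous
    rw [Real.dist_eq, dist_eq_norm]
    exact hf x y
  have hgc : Continuous g := Real.continuous_exp.comp hfc.neg
  have hop : ∀ t, IsOpen {z | t < g z} := fun t => isOpen_lt continuous_const hgc
  -- the key inclusion
  have key : ∀ x y t, 0 < t → x ∈ ballRe {z | t < g z} →
      y ∈ ballRe {z | Real.exp (-(L * ‖x - y‖)) * t < g z} := by
    intro x y t ht hx
    refine ballRe_step hn (hop _) (hop _) ?_ ?_ hx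
    · intro u hu z hz
      have h1 := (abs_le.1 (hf (u + z) u)).2
      rw [add_sub_cancel_left] at h1
      have h2 : L * ‖z‖ ≤ L * ‖x - y‖ := by gcongr
      calc Real.exp (-(L * ‖x - y‖)) * t < Real.exp (-(L * ‖x - y‖)) * Real.exp (-f u) :=
            mul_lt_mul_of_pos_left hu (Real.exp_pos _)
        _ = Real.exp (-(L * ‖x - y‖) + -f u) := (Real.exp_add _ _).symm
        _ ≤ _ := Real.exp_le_exp.2 (by linarith)
    · intro u hu
      have : Real.exp (-(L * ‖x - y‖)) ≤ 1 := Real.exp_le_one_iff.2 (by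
        have := mul_nonneg hL.le (norm_nonneg (x - y)); linarith)
      have hu' : t < g u := hu
      show _ < g u
      nlinarith
  have mono : ∀ x s t, s ≤ t → x ∈ ballRe {z | t < g z} → x ∈ ballRe {z | s < g z} := by
    intro x s t hst hx
    refine ballRe_step (x := x) hn (hop _) (hop _) ?_ ?_ hx
    · intro u hu z hz
      rw [sub_self, norm_zero] at hz
      exact absurd hz (norm_nonneg z).not_gt
    · intro u hu
      exact hst.trans_lt hu
  set φ : EuclideanSpace ℝ (Fin n) → ℝ → ℝ := fun x t =>
    (ballRe {z | t < g z}).indicator (fun _ => (1 : ℝ)) x with hφ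
  have hdec : ∀ x, decRe g x = ∫ t in Ioi (0:ℝ), φ x t := fun x => rfl
  have φ0 : ∀ x t, 0 ≤ φ x t := fun x t => indicator_nonneg (fun _ _ => zero_le_one) _
  have φ1 : ∀ x t, φ x t ≤ 1 := fun x t => indicator_le' (fun _ _ => le_rfl) (fun _ _ => zero_le_one) _
  have φm : ∀ x, Antitone (φ x) := by
    intro x s t hst
    by_cases h : x ∈ ballRe {z | t < g z}
    · simp [hφ, h, mono x s t hst h]
    · refine le_trans (le_of_eq ?_) (φ0 x s)
      simp [hφ, h]
  by_cases hall : ∃ x, ∀ t, 0 < t → x ∈ ballRe {z | t < g z}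
  · obtain ⟨x0, hx0⟩ := hall
    have hc : ∀ x t, 0 < t → φ x t = 1 := by
      intro x t ht
      have := key x0 x (Real.exp (L * ‖x0 - x‖) * t) (by positivity) (hx0 _ (by positivity))
      rw [← mul_assoc, ← Real.exp_add, neg_add_cancel, Real.exp_zero, one_mul] at this
      simp [hφ, this]
    have hd : ∀ x, decRe g x = ∫ t in Ioi (0:ℝ), 1 := fun x => by
      rw [hdec]
      exact setIntegral_congr_fun measurableSet_Ioi fun t ht => hc x t ht
    intro x y
    have : incRe f x = incRe f y := by
      unfold incRe
      rw [hd x, hd y]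
    rw [this, sub_self, abs_zero]
    positivity
  push Not at hall
  have hint : ∀ x, IntegrableOn (φ x) (Ioi 0) := by
    intro x
    obtain ⟨T, hT, hxT⟩ := hall x
    have hz : ∀ t, T ≤ t → φ x t = 0 := by
      intro t ht
      have : x ∉ ballRe {z | t < g z} := fun h => hxT (mono x T t ht h)
      simp [hφ, this]
    have h1 : IntegrableOn (φ x) (Ioc 0 T) := by
      refine Measure.integrableOn_of_bounded (M := 1) (by simp)
        (φm x).measurable.aestronglyMeasurable (Filter.Eventually.of_forall fun t => ?_)
      rw [Real.norm_of_nonneg (φ0 x t)]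
      exact φ1 x t
    have h2 : IntegrableOn (φ x) (Ioi T) :=
      (integrableOn_zero (ε' := ℝ)).congr_fun (fun t ht => (hz t (le_of_lt ht)).symm) measurableSet_Ioi
    rw [← Ioc_union_Ioi_eq_Ioi hT.le]
    exact h1.union h2
  have hpos : ∀ x, 0 < decRe g x := by
    intro x
    set s := ‖x‖ + 1 with hs
    set T := Real.exp (-(f 0 + L * s)) with hTdef
    have hT : 0 < T := Real.exp_pos _
    have hmem : x ∈ ballRe {z | T < g z} := by
      refine ballRe_ball hn (s := s) (by positivity) ?_ (by linarith)
      intro z hz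
      rw [mem_ball_zero_iff] at hz
      have h1 := (abs_le.1 (hf z 0)).2
      rw [sub_zero] at h1
      have : L * ‖z‖ < L * s := by gcongr
      exact Real.exp_lt_exp.2 (by linarith)
    have hone : ∀ t ∈ Ioc 0 T, φ x t = 1 := by
      intro t ht
      simp [hφ, mono x t T ht.2 hmem]
    rw [hdec]
    calc 0 < T := hT
      _ = ∫ t in Ioc 0 T, φ x t := by
        rw [setIntegral_congr_fun measurableSet_Ioc hone]
        simp [hT.le]
      _ ≤ _ := setIntegral_mono_set (hint x) (Filter.Eventually.of_forall (φ0 x))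
        (Filter.Eventually.of_forall Ioc_subset_Ioi_self)
  have main : ∀ x y, decRe g x ≤ Real.exp (L * ‖x - y‖) * decRe g y := by
    intro x y
    set c := Real.exp (-(L * ‖x - y‖)) with hc
    have hc0 : 0 < c := Real.exp_pos _
    have hsub := integral_comp_mul_left_Ioi (φ y) 0 hc0
    rw [mul_zero, ← hdec, smul_eq_mul, hc, ← Real.exp_neg, neg_neg] at hsub
    rw [← hsub, hdec]
    refine setIntegral_mono_on (hint x) ?_ measurableSet_Ioi ?_
    · have := (integrableOn_Ioi_comp_mul_left_iff (φ y) 0 hc0).2 (by rw [mul_zero]; exact hint y)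
      exact this
    · intro t ht
      by_cases h : x ∈ ballRe {z | t < g z}
      · have := key x y t ht h
        simp only [hφ]
        rw [indicator_of_mem h, indicator_of_mem this]
      · refine le_trans (le_of_eq ?_) (φ0 y _)
        simp [hφ, h]
  have fin : ∀ x y, incRe f y - incRe f x ≤ L * ‖x - y‖ := by
    intro x y
    have h1 := Real.log_le_log (hpos x) (main x y)
    rw [Real.log_mul (Real.exp_pos _).ne' (hpos y).ne', Real.log_exp] at h1
    unfold incRe
    linarith
  intro x y
  rw [abs_le]
  have h1 := fin x y
  have h2 := fin y x
  rw [norm_sub_rev] at h2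
  constructor <;> linarith
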